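/- There exists a pair (ᾱ, β̄) in the achievable storage-retrieval rate region R of the (2,2) PIR problem with β̄ = 3/4 and ᾱ + 6β̄ < 6 (namely ᾱ = 1/4 + (3/4)·log₂ 3 < 3/2); consequently, non-linear (2,2) PIR codes achieve a pair that is not achievable by any linear (2,2) PIR code. -/

import Mathlib

open scoped BigOperators

namespace PIR

/-- Messages are length-`L` vectors over `F_2`. -/
abbrev Msg (L : ℕ) := Fin L → ZMod 2

/-- A (2,2) PIR code (without the correctness condition) with message length `L`
and query alphabet `Q`.  The two messages are independent and uniform on `F_2^L`;
the queries are independent of the messages (built into the model: the query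
distribution `P k` for desired message `k` does not depend on the messages). -/
structure CodeBase (L : ℕ) (Q : Type) [Fintype Q] [DecidableEq Q] where
  /-- query distribution for desired message index `k` -/
  P : Fin 2 → Q × Q → ℝ
  P_nonneg : ∀ k qq, 0 ≤ P k qq
  P_sum : ∀ k, ∑ qq : Q × Q, P k qq = 1
  /-- number of stored `F_2` symbols at database `n` -/
  stor : Fin 2 → ℕ
  /-- storage encoders -/
  phi : (n : Fin 2) → Msg L × Msg L → (Fin (stor n) → ZMod 2)
  /-- answer lengths -/
  blen : Fin 2 → Q → ℕ
  /-- deterministic answer functions -/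
  ans : (n : Fin 2) → (q : Q) → (Fin (stor n) → ZMod 2) → (Fin (blen n q) → ZMod 2)
  /-- decoding functions -/
  dec : (k : Fin 2) → (q₁ q₂ : Q) → (Fin (blen 0 q₁) → ZMod 2) →
      (Fin (blen 1 q₂) → ZMod 2) → Msg L
  /-- Privacy: for each database `n`, the joint distribution of
  `(Q_n^{[k]}, A_n^{[k]}, S_n)` is the same for `k = 1, 2`.  Since the answer
  `A_n` is the fixed deterministic function `ans` of `(Q_n, S_n)` (not
  depending on `k`), this is expressed as equality of the joint distributions of
  `(Q_n, S_n)` (messages uniform, queries independent of messages). -/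
  privacy : ∀ (n : Fin 2) (q : Q) (s : Fin (stor n) → ZMod 2),
    (∑ qq : Q × Q, if (if n = 0 then qq.1 else qq.2) = q then P 0 qq else 0) *
      ((Finset.univ.filter (fun w : Msg L × Msg L => phi n w = s)).card : ℝ) =
    (∑ qq : Q × Q, if (if n = 0 then qq.1 else qq.2) = q then P 1 qq else 0) *
      ((Finset.univ.filter (fun w : Msg L × Msg L => phi n w = s)).card : ℝ)

variable {L : ℕ} {Q : Type} [Fintype Q] [DecidableEq Q]

/-- The desired message `W_k`. -/
def target (k : Fin 2) (w : Msg L × Msg L) : Msg L := if k = 0 then w.1 else w.2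

/-- The decoder output `Ŵ_k` when the realized queries are `qq` and the messages `w`. -/
def retrieved (C : CodeBase L Q) (k : Fin 2) (qq : Q × Q) (w : Msg L × Msg L) : Msg L :=
  C.dec k qq.1 qq.2 (C.ans 0 qq.1 (C.phi 0 w)) (C.ans 1 qq.2 (C.phi 1 w))

/-- Zero-error correctness: `Ŵ_k = W_k` for all realizations. -/
def IsZeroError (C : CodeBase L Q) : Prop :=
  ∀ (k : Fin 2) (w : Msg L × Msg L) (qq : Q × Q), C.P k qq ≠ 0 →
    retrieved C k qq w = target k w

/-- The average probability of error `P_e`. -/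
noncomputable def Pe (C : CodeBase L Q) : ℝ :=
  (1/2) * ∑ k : Fin 2, ∑ w : Msg L × Msg L, ∑ qq : Q × Q,
    ((2:ℝ)^(2*L))⁻¹ * C.P k qq * (if retrieved C k qq w ≠ target k w then 1 else 0)

/-- The retrieval rate `β_n = E[β_n^{(Q_n)}]` (the marginal of `Q_n` is the same
for `k=1,2` by privacy; we use `k=1`, i.e. index `0`). -/
noncomputable def betaRate (C : CodeBase L Q) (n : Fin 2) : ℝ :=
  ∑ qq : Q × Q, C.P 0 qq * (C.blen n (if n = 0 then qq.1 else qq.2) : ℝ)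

/-- A linear PIR code: storage encoders and answer functions are `F_2`-linear. -/
def IsLinear (C : CodeBase L Q) : Prop :=
  (∀ n : Fin 2, IsLinearMap (ZMod 2) (C.phi n)) ∧
  (∀ (n : Fin 2) (q : Q), IsLinearMap (ZMod 2) (C.ans n q))

/-- A bundled PIR code (with its query alphabet). -/
structure Code (L : ℕ) where
  Q : Type
  [fQ : Fintype Q]
  [dQ : DecidableEq Q]
  base : CodeBase L Q

attribute [instance] Code.fQ Code.dQ

/-- A normalized storage-retrieval pair `(ᾱ, β̄)` is achievable. -/
def Achievable (ab : ℝ × ℝ) : Prop :=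
  ∀ ε > (0:ℝ), ∃ L₀ : ℕ, ∀ L ≥ L₀, ∃ C : Code L,
    IsZeroError C.base ∧
    ((C.base.stor 0 + C.base.stor 1 : ℕ) : ℝ) / 2 ≤ L * (ab.1 + ε) ∧
    (betaRate C.base 0 + betaRate C.base 1) / 2 ≤ L * (ab.2 + ε)

/-- Achievability by linear codes. -/
def LinAchievable (ab : ℝ × ℝ) : Prop :=
  ∀ ε > (0:ℝ), ∃ L₀ : ℕ, ∀ L ≥ L₀, ∃ C : Code L,
    IsZeroError C.base ∧ IsLinear C.base ∧
    ((C.base.stor 0 + C.base.stor 1 : ℕ) : ℝ) / 2 ≤ L * (ab.1 + ε) ∧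
    (betaRate C.base 0 + betaRate C.base 1) / 2 ≤ L * (ab.2 + ε)

/-- The achievable storage-retrieval rate region `R`. -/
def Region : Set (ℝ × ℝ) := { ab | Achievable ab }

/-- The query distribution used for the `(2,2)` PIR system: for message 1,
uniform on `{(1,1),(2,2)}`; for message 2, uniform on `{(1,2),(2,1)}`. -/
noncomputable def stdP : Fin 2 → Fin 2 × Fin 2 → ℝ :=
  fun k qq => if (k = 0 ∧ qq.1 = qq.2) ∨ (k = 1 ∧ qq.1 ≠ qq.2) then 1/2 else 0


/-! ### The linear converse -/

section Subspaces

variable {K V : Type*} [Field K] [AddCommGroup V] [Module K V] [FiniteDimensional K V]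

open Module in
theorem finrank_add_le_of_inf_eq_bot {X Y J : Submodule K V} (hX : X ≤ J) (hY : Y ≤ J)
    (h : X ⊓ Y = ⊥) : finrank K X + finrank K Y ≤ finrank K J := by
  have h1 := Submodule.finrank_sup_add_finrank_inf_eq X Y
  rw [h, finrank_bot] at h1
  have h2 : finrank K (X ⊔ Y : Submodule K V) ≤ finrank K J :=
    Submodule.finrank_mono (sup_le hX hY)
  omega

open Module in
/-- The key subspace inequality, for a wedge `A₁ - B - A₂`, where `(A₁, B)` decodes the first
message and `(A₂, B)` decodes the second one (all subspaces are kernels). -/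
theorem wedge_ineq {K1 K2 A1 A2 B : Submodule K V} (h12 : K1 ⊓ K2 = ⊥)
    (h1 : A1 ⊓ B ≤ K1) (h2 : A2 ⊓ B ≤ K2) :
    finrank K (A1 ⊓ A2 : Submodule K V) + finrank K (A2 ⊓ K1 : Submodule K V) +
      finrank K (A1 ⊓ K2 : Submodule K V) + finrank K (A1 ⊓ B : Submodule K V) +
      finrank K (A2 ⊓ B : Submodule K V) ≤ finrank K A1 + finrank K A2 := by
  have e := Submodule.finrank_sup_add_finrank_inf_eq A1 A2
  have a1 : finrank K (A1 ⊓ B : Submodule K V) + finrank K (A2 ⊓ K1 : Submodule K V) ≤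
      finrank K ((A1 ⊔ A2) ⊓ K1 : Submodule K V) := by
    apply finrank_add_le_of_inf_eq_bot
    · exact le_inf (inf_le_left.trans le_sup_left) h1
    · exact le_inf (inf_le_left.trans le_sup_right) inf_le_right
    · rw [eq_bot_iff, ← h12]
      refine le_inf (inf_le_right.trans inf_le_right) (le_trans ?_ h2)
      exact le_inf (inf_le_right.trans inf_le_left) (inf_le_left.trans inf_le_right)
  have a2 : finrank K (A2 ⊓ B : Submodule K V) + finrank K (A1 ⊓ K2 : Submodule K V) ≤
      finrank K ((A1 ⊔ A2) ⊓ K2 : Submodule K V) := by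
    apply finrank_add_le_of_inf_eq_bot
    · exact le_inf (inf_le_left.trans le_sup_right) h2
    · exact le_inf (inf_le_left.trans le_sup_left) inf_le_right
    · rw [eq_bot_iff, ← h12]
      refine le_inf (le_trans ?_ h1) (inf_le_right.trans inf_le_right)
      exact le_inf (inf_le_right.trans inf_le_left) (inf_le_left.trans inf_le_right)
  have a3 : finrank K ((A1 ⊔ A2) ⊓ K1 : Submodule K V) +
      finrank K ((A1 ⊔ A2) ⊓ K2 : Submodule K V) ≤ finrank K (A1 ⊔ A2 : Submodule K V) := by
    apply finrank_add_le_of_inf_eq_bot inf_le_left inf_le_left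
    rw [eq_bot_iff, ← h12]
    exact le_inf (inf_le_left.trans inf_le_right) (inf_le_right.trans inf_le_right)
  omega

open Module in
theorem inf_lower (A B : Submodule K V) :
    finrank K A + finrank K B ≤ finrank K V + finrank K (A ⊓ B : Submodule K V) := by
  have e := Submodule.finrank_sup_add_finrank_inf_eq A B
  have := Submodule.finrank_le (A ⊔ B)
  omega

end Subspaces

/-- Averaging over a wedge: two joint weights with a common marginal. -/
theorem wedge_average {X Y : Type*} [Fintype X] [Fintype Y] (P R : X → Y → ℝ)
    (hP : ∀ x y, 0 ≤ P x y) (hR : ∀ x y, 0 ≤ R x y)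
    (hm : ∀ x, ∑ y, P x y = ∑ y, R x y) (hs : ∑ x, ∑ y, P x y = 1)
    (F G : X → Y → ℝ) (c : ℝ)
    (h : ∀ x y y', P x y ≠ 0 → R x y' ≠ 0 → c ≤ F x y + G x y') :
    c ≤ ∑ x, ∑ y, P x y * F x y + ∑ x, ∑ y, R x y * G x y := by
  have key : ∀ x, (∑ y, P x y) * c ≤ ∑ y, P x y * F x y + ∑ y, R x y * G x y := by
    intro x
    have hm0 : 0 ≤ ∑ y, P x y := Finset.sum_nonneg fun y _ => hP x y
    rcases hm0.eq_or_lt with h0 | hpos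
    · have p0 : ∀ y, P x y = 0 := by
        intro y
        exact (Finset.sum_eq_zero_iff_of_nonneg fun y _ => hP x y).1 h0.symm y (Finset.mem_univ y)
      have r0 : ∀ y, R x y = 0 := by
        intro y
        exact (Finset.sum_eq_zero_iff_of_nonneg fun y _ => hR x y).1
          ((hm x).symm.trans h0.symm) y (Finset.mem_univ y)
      simp [p0, r0]
    · have e : (∑ y, P x y) * ((∑ y, P x y) * c) ≤
          (∑ y, P x y) * (∑ y, P x y * F x y + ∑ y, R x y * G x y) := by
        have e1 : (∑ y, P x y) * ((∑ y, P x y) * c) = ∑ y, ∑ y', P x y * R x y' * c := by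
          nth_rewrite 2 [hm x]
          rw [← mul_assoc, Finset.sum_mul_sum, Finset.sum_mul]
          simp_rw [Finset.sum_mul]
        have e2 : (∑ y, P x y) * (∑ y, P x y * F x y + ∑ y, R x y * G x y) =
            ∑ y, ∑ y', P x y * R x y' * (F x y + G x y') := by
          rw [mul_add]
          nth_rewrite 1 [hm x]
          rw [Finset.sum_mul_sum, Finset.sum_mul_sum, Finset.sum_comm, ← Finset.sum_add_distrib]
          refine Finset.sum_congr rfl fun y _ => ?_
          rw [← Finset.sum_add_distrib]
          refine Finset.sum_congr rfl fun y' _ => ?_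
          ring
        rw [e1, e2]
        refine Finset.sum_le_sum fun y _ => Finset.sum_le_sum fun y' _ => ?_
        by_cases h1 : P x y = 0
        · simp [h1]
        by_cases h2 : R x y' = 0
        · simp [h2]
        exact mul_le_mul_of_nonneg_left (h x y y' h1 h2) (mul_nonneg (hP _ _) (hR _ _))
      exact le_of_mul_le_mul_left e hpos
  calc c = ∑ x, (∑ y, P x y) * c := by rw [← Finset.sum_mul, hs, one_mul]
    _ ≤ _ := by
      rw [← Finset.sum_add_distrib]
      exact Finset.sum_le_sum fun x _ => key x

theorem marg_fst {L : ℕ} {Q : Type} [Fintype Q] [DecidableEq Q] (C : CodeBase L Q) (q : Q) :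
    ∑ r, C.P 0 (q, r) = ∑ r, C.P 1 (q, r) := by
  have h := C.privacy 0 q (C.phi 0 0)
  have hc : ((Finset.univ.filter
      (fun w : Msg L × Msg L => C.phi 0 w = C.phi 0 0)).card : ℝ) ≠ 0 := by
    rw [Nat.cast_ne_zero]
    exact (Finset.card_pos.2 ⟨0, by simp⟩).ne'
  have h' := mul_right_cancel₀ hc h
  simpa [Fintype.sum_prod_type, Finset.sum_comm (s := Finset.univ (α := Q)), Finset.sum_ite_eq]
    using h'

theorem marg_snd {L : ℕ} {Q : Type} [Fintype Q] [DecidableEq Q] (C : CodeBase L Q) (q : Q) :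
    ∑ r, C.P 0 (r, q) = ∑ r, C.P 1 (r, q) := by
  have h := C.privacy 1 q (C.phi 1 0)
  have hc : ((Finset.univ.filter
      (fun w : Msg L × Msg L => C.phi 1 w = C.phi 1 0)).card : ℝ) ≠ 0 := by
    rw [Nat.cast_ne_zero]
    exact (Finset.card_pos.2 ⟨0, by simp⟩).ne'
  have h' := mul_right_cancel₀ hc h
  simpa [Fintype.sum_prod_type, Finset.sum_ite_eq] using h'

/-- Expectation under the query distribution for message `k`. -/
noncomputable def Ex {L : ℕ} {Q : Type} [Fintype Q] [DecidableEq Q] (C : CodeBase L Q)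
    (k : Fin 2) (f : Q → Q → ℝ) : ℝ := ∑ a, ∑ b, C.P k (a, b) * f a b

section Ex

variable {L : ℕ} {Q : Type} [Fintype Q] [DecidableEq Q] (C : CodeBase L Q)

theorem Ex_sub (k : Fin 2) (f g : Q → Q → ℝ) :
    Ex C k (fun a b => f a b - g a b) = Ex C k f - Ex C k g := by
  simp [Ex, mul_sub, Finset.sum_sub_distrib]

theorem Ex_add (k : Fin 2) (f g : Q → Q → ℝ) :
    Ex C k (fun a b => f a b + g a b) = Ex C k f + Ex C k g := by
  simp [Ex, mul_add, Finset.sum_add_distrib]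

theorem Ex_const (k : Fin 2) (c : ℝ) : Ex C k (fun _ _ => c) = c := by
  have h := C.P_sum k
  rw [Fintype.sum_prod_type] at h
  simp only [Ex, ← Finset.sum_mul]
  rw [h, one_mul]

theorem Ex_mono (k : Fin 2) (f g : Q → Q → ℝ) (h : ∀ a b, C.P k (a, b) ≠ 0 → f a b ≤ g a b) :
    Ex C k f ≤ Ex C k g := by
  refine Finset.sum_le_sum fun a _ => Finset.sum_le_sum fun b _ => ?_
  by_cases h0 : C.P k (a, b) = 0
  · simp [h0]
  · exact mul_le_mul_of_nonneg_left (h a b h0) (C.P_nonneg _ _)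

theorem Ex_fst (f : Q → ℝ) : Ex C 0 (fun a _ => f a) = Ex C 1 (fun a _ => f a) := by
  simp only [Ex, ← Finset.sum_mul, marg_fst]

theorem Ex_snd (f : Q → ℝ) : Ex C 0 (fun _ b => f b) = Ex C 1 (fun _ b => f b) := by
  unfold Ex
  rw [Finset.sum_comm, Finset.sum_comm (f := fun a b => C.P 1 (a, b) * f b)]
  simp only [← Finset.sum_mul, marg_snd]

theorem Ex_wedge_fst (F G : Q → Q → ℝ) (c : ℝ)
    (h : ∀ a b b', C.P 0 (a, b) ≠ 0 → C.P 1 (a, b') ≠ 0 → c ≤ F a b + G a b') :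
    c ≤ Ex C 0 F + Ex C 1 G := by
  refine wedge_average (fun a b => C.P 0 (a, b)) (fun a b => C.P 1 (a, b))
    (fun _ _ => C.P_nonneg _ _) (fun _ _ => C.P_nonneg _ _) (marg_fst C) ?_ F G c h
  rw [← C.P_sum 0, Fintype.sum_prod_type]

theorem Ex_wedge_snd (F G : Q → Q → ℝ) (c : ℝ)
    (h : ∀ b a a', C.P 0 (a, b) ≠ 0 → C.P 1 (a', b) ≠ 0 → c ≤ F a b + G a' b) :
    c ≤ Ex C 0 F + Ex C 1 G := by
  have := wedge_average (fun b a => C.P 0 (a, b)) (fun b a => C.P 1 (a, b))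
    (fun _ _ => C.P_nonneg _ _) (fun _ _ => C.P_nonneg _ _) (marg_snd C)
    (by rw [← C.P_sum 0, Fintype.sum_prod_type, Finset.sum_comm])
    (fun b a => F a b) (fun b a => G a b) c h
  unfold Ex
  rw [Finset.sum_comm, Finset.sum_comm (f := fun a b => C.P 1 (a, b) * G a b)]
  exact this

end Ex

open Module in
/-- Linear codes satisfy `α₁ + α₂ + 6 (β₁ + β₂) ≥ 12 L`. -/
theorem linear_bound {L : ℕ} {Q : Type} [Fintype Q] [DecidableEq Q] (C : CodeBase L Q)
    (hz : IsZeroError C) (hl : IsLinear C) :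
    12 * (L : ℝ) ≤ ((C.stor 0 + C.stor 1 : ℕ) : ℝ) + 6 * (betaRate C 0 + betaRate C 1) := by
  obtain ⟨hphi, hans⟩ := hl
  let f : (n : Fin 2) → (Msg L × Msg L) →ₗ[ZMod 2] (Fin (C.stor n) → ZMod 2) :=
    fun n => (hphi n).mk' _
  let g : (n : Fin 2) → (q : Q) → (Msg L × Msg L) →ₗ[ZMod 2] (Fin (C.blen n q) → ZMod 2) :=
    fun n q => ((hans n q).mk' _).comp (f n)
  let A : Fin 2 → Q → Submodule (ZMod 2) (Msg L × Msg L) := fun n q => LinearMap.ker (g n q)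
  let K1 : Submodule (ZMod 2) (Msg L × Msg L) := LinearMap.ker (LinearMap.fst _ _ _)
  let K2 : Submodule (ZMod 2) (Msg L × Msg L) := LinearMap.ker (LinearMap.snd _ _ _)
  have hg : ∀ n q w, g n q w = C.ans n q (C.phi n w) := fun _ _ _ => rfl
  have hV : finrank (ZMod 2) (Msg L × Msg L) = 2 * L := by
    simp [Module.finrank_prod]; ring
  have h12 : K1 ⊓ K2 = ⊥ := by
    rw [eq_bot_iff]
    rintro ⟨w1, w2⟩ ⟨h1, h2⟩
    simp only [K1, K2, SetLike.mem_coe, LinearMap.mem_ker, LinearMap.fst_apply,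
      LinearMap.snd_apply] at h1 h2
    simp [h1, h2]
  have hdec : ∀ k a b, C.P k (a, b) ≠ 0 → ∀ w ∈ A 0 a ⊓ A 1 b, target k w = 0 := by
    rintro k a b hp w ⟨ha, hb⟩
    have h0 := hz k 0 (a, b) hp
    have h1 := hz k w (a, b) hp
    have ha' : C.ans 0 a (C.phi 0 w) = C.ans 0 a (C.phi 0 0) := by
      rw [← hg, ← hg, map_zero]; exact ha
    have hb' : C.ans 1 b (C.phi 1 w) = C.ans 1 b (C.phi 1 0) := by
      rw [← hg, ← hg, map_zero]; exact hb
    rw [← h1]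
    unfold retrieved at h0 ⊢
    simp only at h0 ⊢
    rw [ha', hb', h0]
    unfold target
    split_ifs <;> rfl
  have hd0 : ∀ a b, C.P 0 (a, b) ≠ 0 → A 0 a ⊓ A 1 b ≤ K1 := by
    intro a b hp w hw
    have := hdec 0 a b hp w hw
    simpa [target, K1] using this
  have hd1 : ∀ a b, C.P 1 (a, b) ≠ 0 → A 0 a ⊓ A 1 b ≤ K2 := by
    intro a b hp w hw
    have := hdec 1 a b hp w hw
    simpa [target, K2] using this
  have hrank : ∀ n q, 2 * L ≤ finrank (ZMod 2) (A n q) + C.blen n q := by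
    intro n q
    have h := LinearMap.finrank_range_add_finrank_ker (g n q)
    have h2 : finrank (ZMod 2) (LinearMap.range (g n q)) ≤ C.blen n q := by
      simpa using Submodule.finrank_le (LinearMap.range (g n q))
    have h3 : finrank (ZMod 2) (LinearMap.ker (g n q)) = finrank (ZMod 2) (A n q) := rfl
    omega
  have hstor : ∀ n q q', 2 * L ≤ finrank (ZMod 2) (A n q ⊓ A n q' : Submodule _ _) + C.stor n := by
    intro n q q'
    have h := LinearMap.finrank_range_add_finrank_ker (f n)
    have h2 : finrank (ZMod 2) (LinearMap.range (f n)) ≤ C.stor n := by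
      simpa using Submodule.finrank_le (LinearMap.range (f n))
    have h3 : LinearMap.ker (f n) ≤ A n q ⊓ A n q' :=
      le_inf (LinearMap.ker_le_ker_comp _ _) (LinearMap.ker_le_ker_comp _ _)
    have h4 := Submodule.finrank_mono h3
    omega
  let d : Fin 2 → Q → ℝ := fun n q => finrank (ZMod 2) (A n q)
  let u : Fin 2 → Q → ℝ := fun n q => finrank (ZMod 2) (A n q ⊓ K1 : Submodule _ _)
  let v : Fin 2 → Q → ℝ := fun n q => finrank (ZMod 2) (A n q ⊓ K2 : Submodule _ _)
  let e : Q → Q → ℝ := fun a b => finrank (ZMod 2) (A 0 a ⊓ A 1 b : Submodule _ _)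
  -- the two wedges
  have w0 : 2 * (L : ℝ) - C.stor 0 ≤ Ex C 0 (fun a b => d 0 a - v 0 a - e a b) +
      Ex C 1 (fun a b => d 0 a - u 0 a - e a b) := by
    apply Ex_wedge_snd
    intro b a a' hp hp'
    have h := wedge_ineq h12 (hd0 a b hp) (hd1 a' b hp')
    have h' := hstor 0 a a'
    have hr : (finrank (ZMod 2) (A 0 a ⊓ A 0 a' : Submodule _ _) : ℝ) + u 0 a' + v 0 a + e a b
        + e a' b ≤ d 0 a + d 0 a' := by
      simp only [d, u, v, e]; exact_mod_cast h
    have hr' : 2 * (L : ℝ) ≤ (finrank (ZMod 2) (A 0 a ⊓ A 0 a' : Submodule _ _) : ℝ)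
        + C.stor 0 := by exact_mod_cast h'
    linarith
  have w1 : 2 * (L : ℝ) - C.stor 1 ≤ Ex C 0 (fun a b => d 1 b - v 1 b - e a b) +
      Ex C 1 (fun a b => d 1 b - u 1 b - e a b) := by
    apply Ex_wedge_fst
    intro a b b' hp hp'
    have h := wedge_ineq h12 ((inf_comm _ _).trans_le (hd0 a b hp))
      ((inf_comm _ _).trans_le (hd1 a b' hp'))
    have h' := hstor 1 b b'
    rw [inf_comm (A 1 b) (A 0 a), inf_comm (A 1 b') (A 0 a)] at h
    have hr : (finrank (ZMod 2) (A 1 b ⊓ A 1 b' : Submodule _ _) : ℝ) + u 1 b' + v 1 b + e a b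
        + e a b' ≤ d 1 b + d 1 b' := by
      simp only [d, u, v, e]; exact_mod_cast h
    have hr' : 2 * (L : ℝ) ≤ (finrank (ZMod 2) (A 1 b ⊓ A 1 b' : Submodule _ _) : ℝ)
        + C.stor 1 := by exact_mod_cast h'
    linarith
  simp only [Ex_sub] at w0 w1
  have m1 : Ex C 0 e ≤ Ex C 1 (fun a _ => u 0 a) := by
    rw [← Ex_fst]
    refine Ex_mono C 0 _ _ fun a b hp => ?_
    exact Nat.cast_le.2 (Submodule.finrank_mono (le_inf inf_le_left (hd0 a b hp)))
  have m2 : Ex C 1 e ≤ Ex C 0 (fun a _ => v 0 a) := by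
    rw [Ex_fst]
    refine Ex_mono C 1 _ _ fun a b hp => ?_
    exact Nat.cast_le.2 (Submodule.finrank_mono (le_inf inf_le_left (hd1 a b hp)))
  have m3 : Ex C 0 e ≤ Ex C 1 (fun _ b => u 1 b) := by
    rw [← Ex_snd]
    refine Ex_mono C 0 _ _ fun a b hp => ?_
    exact Nat.cast_le.2 (Submodule.finrank_mono (le_inf inf_le_right (hd0 a b hp)))
  have m4 : Ex C 1 e ≤ Ex C 0 (fun _ b => v 1 b) := by
    rw [Ex_snd]
    refine Ex_mono C 1 _ _ fun a b hp => ?_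
    exact Nat.cast_le.2 (Submodule.finrank_mono (le_inf inf_le_right (hd1 a b hp)))
  have lo : ∀ k, Ex C k (fun a _ => d 0 a) + Ex C k (fun _ b => d 1 b) ≤ 2 * L + Ex C k e := by
    intro k
    rw [← Ex_add, ← Ex_const C k (2 * (L : ℝ)), ← Ex_add]
    refine Ex_mono C k _ _ fun a b _ => ?_
    have h := inf_lower (A 0 a) (A 1 b)
    rw [hV] at h
    have : d 0 a + d 1 b ≤ 2 * L + e a b := by
      simp only [d, e]; exact_mod_cast h
    exact this
  have b0 : 2 * (L : ℝ) ≤ Ex C 0 (fun a _ => d 0 a) + betaRate C 0 := by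
    have : betaRate C 0 = Ex C 0 (fun a _ => (C.blen 0 a : ℝ)) := by
      simp [betaRate, Ex, Fintype.sum_prod_type]
    rw [this, ← Ex_add, ← Ex_const C 0 (2 * (L : ℝ))]
    refine Ex_mono C 0 _ _ fun a b _ => ?_
    have := hrank 0 a
    have : 2 * (L : ℝ) ≤ d 0 a + C.blen 0 a := by
      simp only [d]; exact_mod_cast this
    exact this
  have b1 : 2 * (L : ℝ) ≤ Ex C 0 (fun _ b => d 1 b) + betaRate C 1 := by
    have : betaRate C 1 = Ex C 0 (fun _ b => (C.blen 1 b : ℝ)) := by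
      simp [betaRate, Ex, Fintype.sum_prod_type]
    rw [this, ← Ex_add, ← Ex_const C 0 (2 * (L : ℝ))]
    refine Ex_mono C 0 _ _ fun a b _ => ?_
    have := hrank 1 b
    have : 2 * (L : ℝ) ≤ d 1 b + C.blen 1 b := by
      simp only [d]; exact_mod_cast this
    exact this
  have f0 := Ex_fst C (d 0)
  have f1 := Ex_snd C (d 1)
  have l0 := lo 0
  have l1 := lo 1
  push_cast
  linarith

theorem logb_two_three_lt : Real.logb 2 3 < 5 / 3 := by
  rw [Real.logb_lt_iff_lt_rpow (by norm_num) (by norm_num)]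
  have h : ((2 : ℝ) ^ (5 / 3 : ℝ)) ^ 3 = 32 := by
    rw [← Real.rpow_natCast, ← Real.rpow_mul (by norm_num)]
    norm_num
  by_contra hc
  push Not at hc
  have : ((2 : ℝ) ^ (5 / 3 : ℝ)) ^ 3 ≤ 3 ^ 3 := by gcongr
  rw [h] at this
  norm_num at this

/-- The linear converse `ᾱ + 6 β̄ ≥ 6`. -/
theorem lin_converse (ab : ℝ × ℝ) (h : LinAchievable ab) : 6 ≤ ab.1 + 6 * ab.2 := by
  by_contra hc
  push Not at hc
  obtain ⟨L₀, hL⟩ := h ((6 - (ab.1 + 6 * ab.2)) / 14) (by linarith)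
  obtain ⟨C, hz, hl, hs, hb⟩ := hL (L₀ + 1) (by omega)
  have hlb := linear_bound C.base hz hl
  have hpos : (0 : ℝ) < ((L₀ + 1 : ℕ) : ℝ) := by positivity
  generalize ((L₀ + 1 : ℕ) : ℝ) = l at *
  nlinarith

/-! ### Achievability -/

/-- A function with few values can be encoded by short binary strings. -/
theorem exists_encode {Ω σ : Type*} [Fintype Ω] [DecidableEq σ] (f : Ω → σ) (b : ℕ)
    (h : (Finset.univ.image f).card ≤ 2 ^ b) :
    ∃ e : Ω → (Fin b → ZMod 2), ∀ w w', e w = e w' ↔ f w = f w' := by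
  have hc : Fintype.card (Finset.univ.image f) ≤ Fintype.card (Fin b → ZMod 2) := by
    simpa [ZMod.card] using h
  obtain ⟨g⟩ := Function.Embedding.nonempty_of_card_le hc
  refine ⟨fun w => g ⟨f w, by simp⟩, fun w w' => ?_⟩
  rw [g.injective.eq_iff, Subtype.mk.injEq]

theorem stdP_marg (n q : Fin 2) :
    (∑ qq : Fin 2 × Fin 2, if (if n = 0 then qq.1 else qq.2) = q then stdP 0 qq else 0) =
    (∑ qq : Fin 2 × Fin 2, if (if n = 0 then qq.1 else qq.2) = q then stdP 1 qq else 0) := by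
  fin_cases n <;> fin_cases q <;> simp [Fintype.sum_prod_type, stdP]

/-- Building a code from abstract storage and answer maps. -/
theorem exists_code {L : ℕ} {σ ρ : Fin 2 → Type} [∀ n, DecidableEq (σ n)]
    [∀ n, DecidableEq (ρ n)]
    (s : (n : Fin 2) → Msg L × Msg L → σ n) (r : (n : Fin 2) → Fin 2 → Msg L × Msg L → ρ n)
    (bs br : Fin 2 → ℕ)
    (hs : ∀ n, (Finset.univ.image (s n)).card ≤ 2 ^ bs n)
    (hr : ∀ n q, (Finset.univ.image (r n q)).card ≤ 2 ^ br n)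
    (hsr : ∀ n q w w', s n w = s n w' → r n q w = r n q w')
    (h0 : ∀ q w w', r 0 q w = r 0 q w' → r 1 q w = r 1 q w' → w.1 = w'.1)
    (h1 : ∀ q q' w w', q ≠ q' → r 0 q w = r 0 q w' → r 1 q' w = r 1 q' w' → w.2 = w'.2) :
    ∃ C : Code L, IsZeroError C.base ∧ (∀ n, C.base.stor n = bs n) ∧
      ∀ n, betaRate C.base n = br n := by
  classical
  choose es hes using fun n => exists_encode (s n) (bs n) (hs n)
  choose er her using fun n q => exists_encode (r n q) (br n) (hr n q)
  let B : CodeBase L (Fin 2) :=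
    { P := stdP
      P_nonneg := by
        intro k qq
        unfold stdP
        split_ifs <;> norm_num
      P_sum := by
        intro k
        fin_cases k <;> simp [Fintype.sum_prod_type, stdP] <;> norm_num
      stor := bs
      phi := es
      blen := fun n _ => br n
      ans := fun n q x => if h : ∃ w, es n w = x then er n q h.choose else 0
      dec := fun k q₁ q₂ x y =>
        if h : ∃ w, er 0 q₁ w = x ∧ er 1 q₂ w = y then target k h.choose else 0
      privacy := by
        intro n q x
        rw [stdP_marg] }
  have hans : ∀ n q w, B.ans n q (B.phi n w) = er n q w := by
    intro n q w
    have h : ∃ w', es n w' = es n w := ⟨w, rfl⟩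
    have : B.ans n q (B.phi n w) = er n q h.choose := dif_pos h
    rw [this, her]
    exact hsr _ _ _ _ ((hes _ _ _).1 h.choose_spec)
  refine ⟨⟨Fin 2, B⟩, ?_, fun n => rfl, ?_⟩
  · intro k w qq hp
    change retrieved B k qq w = target k w
    unfold retrieved
    rw [hans, hans]
    have h : ∃ w', er 0 qq.1 w' = er 0 qq.1 w ∧ er 1 qq.2 w' = er 1 qq.2 w := ⟨w, rfl, rfl⟩
    have e : B.dec k qq.1 qq.2 (er 0 qq.1 w) (er 1 qq.2 w) = target k h.choose := dif_pos h
    rw [e]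
    have e1 := (her _ _ _ _).1 h.choose_spec.1
    have e2 := (her _ _ _ _).1 h.choose_spec.2
    generalize h.choose = w' at *
    have hp' : stdP k qq ≠ 0 := hp
    unfold stdP at hp'
    have hcase : (k = 0 ∧ qq.1 = qq.2) ∨ (k = 1 ∧ qq.1 ≠ qq.2) := by
      by_contra hc
      exact hp' (if_neg hc)
    rcases hcase with ⟨rfl, hq⟩ | ⟨rfl, hq⟩
    · rw [← hq] at e2
      simpa [target] using h0 _ _ _ e1 e2
    · simpa [target] using h1 _ _ _ _ hq e1 e2
  · intro n
    have hsum := B.P_sum 0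
    change ∑ qq : Fin 2 × Fin 2, B.P 0 qq * (br n : ℝ) = br n
    rw [← Finset.sum_mul, hsum, one_mul]

/-- Covering a finite group by few translates of a large set. -/
theorem exists_cover {X : Type*} [AddCommGroup X] [Fintype X] [DecidableEq X] (G : Finset X)
    (c : ℕ) (hc : Fintype.card X ≤ c * G.card) (t : ℕ) :
    ∃ v : Fin t → X, ((Finset.univ.filter fun x => ∀ j, x + v j ∉ G).card : ℝ) ≤
      Fintype.card X * (1 - 1 / (c : ℝ)) ^ t := by
  have hX : 0 < Fintype.card X := Fintype.card_pos_iff.2 ⟨0⟩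
  have hc0 : 0 < c := by
    rcases Nat.eq_zero_or_pos c with h | h
    · subst h; omega
    · exact h
  induction t with
  | zero => exact ⟨Fin.elim0, by simp⟩
  | succ t ih =>
    obtain ⟨v, hv⟩ := ih
    set U := Finset.univ.filter fun x => ∀ j, x + v j ∉ G with hU
    have hsum : ∑ y : X, (U.filter fun x => x + y ∈ G).card = U.card * G.card := by
      simp_rw [Finset.card_filter]
      rw [Finset.sum_comm]
      rw [Finset.sum_const_nat (m := G.card)]
      intro x _
      rw [← Finset.card_filter]
      apply Finset.card_bij (fun y _ => x + y)
      · intro y hy; simpa using hy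
      · intro y _ y' _ h; exact add_left_cancel h
      · intro z hz; exact ⟨z - x, by simpa using hz, by simp⟩
    obtain ⟨y, -, hy⟩ : ∃ y ∈ (Finset.univ : Finset X),
        (U.card : ℝ) * (1 / c) ≤ ((U.filter fun x => x + y ∈ G).card : ℝ) := by
      apply Finset.exists_le_of_sum_le ⟨0, Finset.mem_univ _⟩
      rw [← Nat.cast_sum, hsum]
      simp only [Finset.sum_const, Finset.card_univ, nsmul_eq_mul]
      have hc' : (Fintype.card X : ℝ) ≤ c * G.card := by exact_mod_cast hc
      have hcr : (0 : ℝ) < c := by exact_mod_cast hc0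
      push_cast
      rw [mul_one_div, mul_div_assoc', div_le_iff₀ hcr]
      have : (0 : ℝ) ≤ U.card := by positivity
      nlinarith
    refine ⟨Fin.snoc v y, ?_⟩
    have hsub : (Finset.univ.filter fun x => ∀ j, x + (Fin.snoc v y : Fin (t + 1) → X) j ∉ G) =
        U.filter fun x => ¬ (x + y ∈ G) := by
      ext x
      simp [hU, Fin.forall_fin_succ']
    rw [hsub]
    have hsplit := Finset.card_filter_add_card_filter_not (s := U) (fun x => x + y ∈ G)
    have hsplit' : ((U.filter fun x => x + y ∈ G).card : ℝ) +
      ((U.filter fun x => ¬ (x + y ∈ G)).card : ℝ) = U.card := by exact_mod_cast hsplit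
    have hle : (1 : ℝ) / c ≤ 1 := by
      rw [div_le_one (by exact_mod_cast hc0)]
      exact_mod_cast hc0
    calc ((U.filter fun x => ¬ (x + y ∈ G)).card : ℝ) ≤ U.card * (1 - 1 / (c : ℝ)) := by
          linarith
      _ ≤ (Fintype.card X * (1 - 1 / (c : ℝ)) ^ t) * (1 - 1 / (c : ℝ)) :=
          mul_le_mul_of_nonneg_right hv (by linarith)
      _ = _ := by ring

theorem exists_cover_all {X : Type*} [AddCommGroup X] [Fintype X] [DecidableEq X] (G : Finset X)
    (c N : ℕ) (hc : Fintype.card X ≤ c * G.card) (hN : Fintype.card X ≤ 2 ^ N) (hN0 : N ≠ 0) :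
    ∃ v : Fin (c * N) → X, ∀ x, ∃ j, x + v j ∈ G := by
  obtain ⟨v, hv⟩ := exists_cover G c hc (c * N)
  refine ⟨v, ?_⟩
  have hX : 0 < Fintype.card X := Fintype.card_pos_iff.2 ⟨0⟩
  have hc0 : 0 < c := by
    rcases Nat.eq_zero_or_pos c with h | h
    · subst h; omega
    · exact h
  have hcr : (0 : ℝ) < c := by exact_mod_cast hc0
  have hle : (1 : ℝ) / c ≤ 1 := by
    rw [div_le_one hcr]
    exact_mod_cast hc0
  have h1 : (1 - 1 / (c : ℝ)) ^ (c * N) ≤ Real.exp (-1) ^ N := by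
    rw [pow_mul]
    refine pow_le_pow_left₀ (pow_nonneg (by linarith) _) ?_ _
    calc (1 - 1 / (c : ℝ)) ^ c ≤ (Real.exp (-(1 / (c : ℝ)))) ^ c := by
          refine pow_le_pow_left₀ (by linarith) ?_ _
          have := Real.add_one_le_exp (-(1 / (c : ℝ)))
          linarith
      _ = Real.exp (-1) := by
          rw [← Real.exp_nat_mul]
          congr 1
          field_simp
  have h2 : Real.exp (-1) < 1 / 2 := by
    have := Real.exp_neg_one_lt_d9
    linarith
  have h3 : (Fintype.card X : ℝ) * (1 - 1 / (c : ℝ)) ^ (c * N) < 1 := by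
    calc (Fintype.card X : ℝ) * (1 - 1 / (c : ℝ)) ^ (c * N)
        ≤ (2 : ℝ) ^ N * Real.exp (-1) ^ N := by
          refine mul_le_mul (by exact_mod_cast hN) h1 (pow_nonneg (by linarith) _) (by positivity)
      _ = (2 * Real.exp (-1)) ^ N := by rw [mul_pow]
      _ < 1 := pow_lt_one₀ (by positivity) (by linarith) hN0
  have h4 : (Finset.univ.filter fun x => ∀ j, x + v j ∉ G).card = 0 := by
    have : ((Finset.univ.filter fun x => ∀ j, x + v j ∉ G).card : ℝ) < 1 := hv.trans_lt h3
    have : (Finset.univ.filter fun x => ∀ j, x + v j ∉ G).card < 1 := by exact_mod_cast this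
    omega
  intro x
  by_contra hx
  push Not at hx
  have : x ∈ (Finset.univ.filter fun x => ∀ j, x + v j ∉ G) := by simpa using hx
  rw [Finset.card_eq_zero.1 h4] at this
  simp at this

theorem exists_code' {L : ℕ} {σ₀ σ₁ ρ₀ ρ₁ : Type} [DecidableEq σ₀] [DecidableEq σ₁]
    [DecidableEq ρ₀] [DecidableEq ρ₁]
    (s₀ : Msg L × Msg L → σ₀) (s₁ : Msg L × Msg L → σ₁)
    (r₀ : Fin 2 → Msg L × Msg L → ρ₀) (r₁ : Fin 2 → Msg L × Msg L → ρ₁)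
    (a₀ a₁ b₀ b₁ : ℕ)
    (hs₀ : (Finset.univ.image s₀).card ≤ 2 ^ a₀) (hs₁ : (Finset.univ.image s₁).card ≤ 2 ^ a₁)
    (hr₀ : ∀ q, (Finset.univ.image (r₀ q)).card ≤ 2 ^ b₀)
    (hr₁ : ∀ q, (Finset.univ.image (r₁ q)).card ≤ 2 ^ b₁)
    (hsr₀ : ∀ q w w', s₀ w = s₀ w' → r₀ q w = r₀ q w')
    (hsr₁ : ∀ q w w', s₁ w = s₁ w' → r₁ q w = r₁ q w')
    (h0 : ∀ q w w', r₀ q w = r₀ q w' → r₁ q w = r₁ q w' → w.1 = w'.1)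
    (h1 : ∀ q q' w w', q ≠ q' → r₀ q w = r₀ q w' → r₁ q' w = r₁ q' w' → w.2 = w'.2) :
    ∃ C : Code L, IsZeroError C.base ∧ C.base.stor 0 = a₀ ∧ C.base.stor 1 = a₁ ∧
      betaRate C.base 0 = b₀ ∧ betaRate C.base 1 = b₁ := by
  have himg : ∀ {α β γ : Type} [Fintype α] [DecidableEq β] [DecidableEq γ] (f : α → β) (g : β → γ),
      (Finset.univ.image fun x => g (f x)).card ≤ (Finset.univ.image f).card := by
    intro α β γ _ _ _ f g
    have : (Finset.univ.image fun x => g (f x)) = (Finset.univ.image f).image g := by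
      rw [Finset.image_image]; rfl
    rw [this]
    exact Finset.card_image_le
  obtain ⟨C, hz, hst, hb⟩ := exists_code (L := L) (σ := fun _ => σ₀ ⊕ σ₁) (ρ := fun _ => ρ₀ ⊕ ρ₁)
    (fun n w => if n = 0 then Sum.inl (s₀ w) else Sum.inr (s₁ w))
    (fun n q w => if n = 0 then Sum.inl (r₀ q w) else Sum.inr (r₁ q w))
    ![a₀, a₁] ![b₀, b₁]
    (by
      rw [Fin.forall_fin_two]
      refine ⟨?_, ?_⟩
      · simpa using (himg s₀ (Sum.inl (β := σ₁))).trans hs₀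
      · simpa using (himg s₁ (Sum.inr (α := σ₀))).trans hs₁)
    (by
      rw [Fin.forall_fin_two]
      refine ⟨fun q => ?_, fun q => ?_⟩
      · simpa using (himg (r₀ q) (Sum.inl (β := ρ₁))).trans (hr₀ q)
      · simpa using (himg (r₁ q) (Sum.inr (α := ρ₀))).trans (hr₁ q))
    (by
      rw [Fin.forall_fin_two]
      refine ⟨fun q w w' h => ?_, fun q w w' h => ?_⟩
      · simpa using hsr₀ q w w' (by simpa using h)
      · simpa using hsr₁ q w w' (by simpa using h))
    (by
      intro q w w' h h'
      exact h0 q w w' (by simpa using h) (by simpa using h'))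
    (by
      intro q q' w w' hq h h'
      exact h1 q q' w w' hq (by simpa using h) (by simpa using h'))
  exact ⟨C, hz, by simp [hst], by simp [hst], by simp [hb], by simp [hb]⟩

theorem card_collision {α : Type*} [Fintype α] [DecidableEq α] (M : ℕ) {a a' : α} (h : a ≠ a') :
    (Finset.univ.filter fun f : α → Fin M => f a' = f a).card * M ≤
      Fintype.card (α → Fin M) := by
  classical
  have e : (Finset.univ.filter fun f : α → Fin M => f a' = f a).card * M =
      ((Finset.univ.filter fun f : α → Fin M => f a' = f a) ×ˢ
        (Finset.univ : Finset (Fin M))).card := by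
    simp [Finset.card_product]
  rw [e, ← Finset.card_univ]
  apply Finset.card_le_card_of_injOn (fun p => Function.update p.1 a' p.2)
  · intro p _; simp
  · rintro ⟨f, c⟩ hf ⟨g, d⟩ hg hfg
    simp only [Finset.coe_product, Set.mem_prod, Finset.mem_coe, Finset.mem_filter,
      Finset.mem_univ, true_and, and_true] at hf hg
    simp only at hfg
    have hcd : c = d := by simpa using congrFun hfg a'
    have hne : ∀ x, x ≠ a' → f x = g x := by
      intro x hx
      simpa [Function.update_of_ne hx] using congrFun hfg x
    have : f = g := by
      funext x
      by_cases hx : x = a'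
      · subst hx
        rw [hf, hg]
        exact hne a h
      · exact hne x hx
    rw [this, hcd]

/-- Random binning followed by expurgation. -/
theorem exists_hash {X α β κ : Type*} [Fintype α] [DecidableEq α] [DecidableEq β] [Fintype κ]
    [DecidableEq X]
    (T : Finset X) (A : κ → X → α) (B : κ → X → β) (N : ℕ)
    (hN : ∀ x ∈ T, ∀ k, ((T.filter fun x' => B k x' = B k x).image (A k)).card ≤ N)
    (hpos : 0 < Fintype.card κ * N) :
    ∃ h : α → Fin (2 * (Fintype.card κ * N)), ∃ G ⊆ T, T.card ≤ 2 * G.card ∧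
      ∀ x ∈ G, ∀ x' ∈ G, ∀ k, B k x' = B k x → h (A k x') = h (A k x) → A k x' = A k x := by
  classical
  set M := 2 * (Fintype.card κ * N) with hM
  let bad : (α → Fin M) → X → Prop := fun h x =>
    ∃ k, ∃ x' ∈ T, B k x' = B k x ∧ h (A k x') = h (A k x) ∧ A k x' ≠ A k x
  have hMpos : 0 < M := by omega
  have : NeZero M := ⟨hMpos.ne'⟩
  have hbad : ∀ x ∈ T, (Finset.univ.filter fun h => bad h x).card * M ≤
      Fintype.card κ * N * Fintype.card (α → Fin M) := by
    intro x hx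
    have hsub : (Finset.univ.filter fun h => bad h x) ⊆
        Finset.univ.biUnion fun k : κ =>
          (((T.filter fun x' => B k x' = B k x).image (A k)).erase (A k x)).biUnion fun a' =>
            Finset.univ.filter fun h : α → Fin M => h a' = h (A k x) := by
      intro h hh
      simp only [Finset.mem_filter, Finset.mem_univ, true_and] at hh
      obtain ⟨k, x', hx', hB, hh', hA⟩ := hh
      simp only [Finset.mem_biUnion, Finset.mem_univ, true_and, Finset.mem_erase,
        Finset.mem_image, Finset.mem_filter]
      exact ⟨k, A k x', ⟨hA, x', ⟨hx', hB⟩, rfl⟩, hh'⟩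
    calc (Finset.univ.filter fun h => bad h x).card * M
        ≤ (∑ k : κ, ∑ a' ∈ ((T.filter fun x' => B k x' = B k x).image (A k)).erase (A k x),
            (Finset.univ.filter fun h : α → Fin M => h a' = h (A k x)).card) * M := by
          refine Nat.mul_le_mul_right _ ((Finset.card_le_card hsub).trans ?_)
          refine Finset.card_biUnion_le.trans (Finset.sum_le_sum fun k _ => ?_)
          exact Finset.card_biUnion_le
      _ = ∑ k : κ, ∑ a' ∈ ((T.filter fun x' => B k x' = B k x).image (A k)).erase (A k x),
            (Finset.univ.filter fun h : α → Fin M => h a' = h (A k x)).card * M := by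
          simp_rw [Finset.sum_mul]
      _ ≤ ∑ k : κ, N * Fintype.card (α → Fin M) := by
          refine Finset.sum_le_sum fun k _ => ?_
          refine (Finset.sum_le_card_nsmul _ _ (Fintype.card (α → Fin M)) ?_).trans ?_
          · intro a' ha'
            exact card_collision M (Finset.mem_erase.1 ha').1.symm
          · rw [smul_eq_mul]
            exact Nat.mul_le_mul_right _ ((Finset.card_erase_le).trans (hN x hx k))
      _ = Fintype.card κ * N * Fintype.card (α → Fin M) := by
          simp [Finset.sum_const, mul_assoc]
  have hsum : ∑ h : α → Fin M, 2 * (T.filter fun x => bad h x).card ≤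
      ∑ _h : α → Fin M, T.card := by
    rw [← Finset.mul_sum]
    have hswap : ∑ h : α → Fin M, (T.filter fun x => bad h x).card =
        ∑ x ∈ T, (Finset.univ.filter fun h => bad h x).card := by
      simp_rw [Finset.card_filter]
      rw [Finset.sum_comm]
    have h1 : (∑ h : α → Fin M, (T.filter fun x => bad h x).card) * M ≤
        T.card * (Fintype.card κ * N * Fintype.card (α → Fin M)) := by
      rw [hswap, Finset.sum_mul, ← smul_eq_mul (T.card)]
      exact Finset.sum_le_card_nsmul _ _ _ hbad
    rw [Finset.sum_const, Finset.card_univ, smul_eq_mul]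
    refine Nat.le_of_mul_le_mul_left ?_ hpos
    calc _ = (∑ h : α → Fin M, (T.filter fun x => bad h x).card) * M := by
          generalize (∑ h : α → Fin M, (T.filter fun x => bad h x).card) = z
          rw [hM]; ring
      _ ≤ _ := h1
      _ = _ := by ring
  obtain ⟨h, -, hh⟩ := Finset.exists_le_of_sum_le (Finset.univ_nonempty) hsum
  refine ⟨h, T.filter fun x => ¬ bad h x, Finset.filter_subset _ _, ?_, ?_⟩
  · have := Finset.card_filter_add_card_filter_not (s := T) (fun x => bad h x)
    omega
  · intro x hx x' hx' k hB hh'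
    by_contra hA
    exact (Finset.mem_filter.1 hx).2 ⟨k, x', (Finset.mem_filter.1 hx').1, hB, hh', hA⟩

theorem choose_four (m : ℕ) : (4 * m).choose m * 27 ^ m ≤ 256 ^ m := by
  have h := add_pow (1 : ℕ) 3 (4 * m)
  have h2 : (4 * m).choose m * 27 ^ m ≤
      ∑ k ∈ Finset.range (4 * m + 1), 1 ^ k * 3 ^ (4 * m - k) * (4 * m).choose k := by
    have := Finset.single_le_sum (f := fun k => 1 ^ k * 3 ^ (4 * m - k) * (4 * m).choose k)
      (s := Finset.range (4 * m + 1)) (fun _ _ => Nat.zero_le _)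
      (Finset.mem_range.2 (by omega : m < 4 * m + 1))
    refine le_trans (le_of_eq ?_) this
    have e : 4 * m - m = 3 * m := by omega
    simp only [one_pow, one_mul, e, pow_mul]
    norm_num [mul_comm]
  refine h2.trans (le_of_eq ?_)
  simp only [Nat.cast_id] at h
  rw [← h, pow_mul]
  norm_num

theorem choose_three (m : ℕ) : (3 * m).choose m * 4 ^ m ≤ 27 ^ m := by
  have h := add_pow (1 : ℕ) 2 (3 * m)
  have h2 : (3 * m).choose m * 4 ^ m ≤
      ∑ k ∈ Finset.range (3 * m + 1), 1 ^ k * 2 ^ (3 * m - k) * (3 * m).choose k := by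
    have := Finset.single_le_sum (f := fun k => 1 ^ k * 2 ^ (3 * m - k) * (3 * m).choose k)
      (s := Finset.range (3 * m + 1)) (fun _ _ => Nat.zero_le _)
      (Finset.mem_range.2 (by omega : m < 3 * m + 1))
    refine le_trans (le_of_eq ?_) this
    have e : 3 * m - m = 2 * m := by omega
    simp only [one_pow, one_mul, e, pow_mul]
    norm_num [mul_comm]
  refine h2.trans (le_of_eq ?_)
  simp only [Nat.cast_id] at h
  rw [← h, pow_mul]
  norm_num

theorem choose_both (m : ℕ) : (4 * m).choose m * (3 * m).choose m ≤ 64 ^ m := by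
  have h := Nat.mul_le_mul (choose_four m) (choose_three m)
  have hp : 0 < 27 ^ m * 4 ^ m := by positivity
  refine le_of_mul_le_mul_right ?_ hp
  calc _ = (4 * m).choose m * 27 ^ m * ((3 * m).choose m * 4 ^ m) := by ring
    _ ≤ _ := h
    _ = _ := by rw [← mul_pow, ← mul_pow, ← mul_pow]; norm_num

theorem choose_central (m : ℕ) (hm : 0 < m) :
    4 ^ (4 * m) ≤ 16 * m ^ 3 * ((4 * m).choose (2 * m) * ((2 * m).choose m * (2 * m).choose m)) := by
  have h1 := Nat.four_pow_le_two_mul_self_mul_centralBinom m hm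
  have h2 := Nat.four_pow_le_two_mul_self_mul_centralBinom (2 * m) (by omega)
  rw [Nat.centralBinom] at h1 h2
  have e : 2 * (2 * m) = 4 * m := by ring
  rw [e] at h2
  have h3 := Nat.mul_le_mul h2 (Nat.mul_le_mul h1 h1)
  calc 4 ^ (4 * m) = 4 ^ (2 * m) * (4 ^ m * 4 ^ m) := by
        rw [← pow_add, ← pow_add]; congr 1; ring
    _ ≤ _ := h3
    _ = _ := by ring

/-! ### The type class of balanced pairs -/

/-- Positions where the pair of symbols is `c`. -/
def cell {m : ℕ} (c : ZMod 2 × ZMod 2) (x : Fin (4 * m) → ZMod 2 × ZMod 2) :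
    Finset (Fin (4 * m)) := Finset.univ.filter fun i => x i = c

/-- Symbol tracked by the answers of database 1. -/
def symA (q : Fin 2) : ZMod 2 × ZMod 2 := if q = 0 then (1, 1) else (0, 0)

/-- Symbol tracked by the answers of database 2. -/
def symB (q : Fin 2) : ZMod 2 × ZMod 2 := if q = 0 then (1, 0) else (0, 1)

/-- Pairs in which each of the four symbols occurs exactly `m` times. -/
def balanced (m : ℕ) : Finset (Fin (4 * m) → ZMod 2 × ZMod 2) :=
  Finset.univ.filter fun x => ∀ c, (cell c x).card = m

theorem mem_balanced {m : ℕ} {x : Fin (4 * m) → ZMod 2 × ZMod 2} :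
    x ∈ balanced m ↔ ∀ c, (cell c x).card = m := by simp [balanced]

theorem cell_eq_iff {m : ℕ} {c : ZMod 2 × ZMod 2} {x y : Fin (4 * m) → ZMod 2 × ZMod 2} :
    cell c x = cell c y ↔ ∀ i, x i = c ↔ y i = c := by
  simp [cell, Finset.ext_iff]

theorem cell_disjoint {m : ℕ} {c d : ZMod 2 × ZMod 2} (h : c ≠ d)
    (x : Fin (4 * m) → ZMod 2 × ZMod 2) : cell c x ⊆ (cell d x)ᶜ := by
  intro i hi
  simp only [cell, Finset.mem_filter, Finset.mem_univ, true_and, Finset.mem_compl] at hi ⊢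
  rw [hi]
  exact h

theorem sym_ne : ∀ q r, symA q ≠ symB r := by decide

theorem sym_fst : ∀ (q : Fin 2) (c d : ZMod 2 × ZMod 2), (c = symA q ↔ d = symA q) →
    (c = symB q ↔ d = symB q) → c.1 = d.1 := by decide

theorem sym_snd : ∀ (q r : Fin 2) (c d : ZMod 2 × ZMod 2), q ≠ r → (c = symA q ↔ d = symA q) →
    (c = symB r ↔ d = symB r) → c.2 = d.2 := by
  have key : ∀ (q r : Fin 2) (c d : ZMod 2 × ZMod 2), (q ≠ r ∧ (c = symA q ↔ d = symA q) ∧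
    (c = symB r ↔ d = symB r)) → c.2 = d.2 := by decide
  exact fun q r c d h1 h2 h3 => key q r c d ⟨h1, h2, h3⟩

theorem fiber_card {m : ℕ} (x : Fin (4 * m) → ZMod 2 × ZMod 2) (hx : x ∈ balanced m)
    {c d : ZMod 2 × ZMod 2} (h : c ≠ d) :
    (((balanced m).filter fun x' => cell d x' = cell d x).image (cell c)).card ≤
      (3 * m).choose m := by
  have hsub : ((balanced m).filter fun x' => cell d x' = cell d x).image (cell c) ⊆
      Finset.powersetCard m (cell d x)ᶜ := by
    intro S hS
    simp only [Finset.mem_image, Finset.mem_filter] at hS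
    obtain ⟨y, ⟨hy, hyx⟩, rfl⟩ := hS
    rw [Finset.mem_powersetCard, ← hyx]
    exact ⟨cell_disjoint h y, mem_balanced.1 hy c⟩
  refine (Finset.card_le_card hsub).trans (le_of_eq ?_)
  rw [Finset.card_powersetCard, Finset.card_compl, mem_balanced.1 hx d, Fintype.card_fin]
  congr 1
  omega

/-- The set of possible contents of the second database (up to the shift index). -/
def pairSet (m : ℕ) : Finset (Finset (Fin (4 * m)) × Finset (Fin (4 * m))) :=
  (Finset.powersetCard m Finset.univ).biUnion fun P =>
    (Finset.powersetCard m Pᶜ).image fun R => (P, R)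

theorem card_pairSet (m : ℕ) : (pairSet m).card ≤ (4 * m).choose m * (3 * m).choose m := by
  refine Finset.card_biUnion_le.trans ?_
  have : (4 * m).choose m = (Finset.powersetCard m (Finset.univ : Finset (Fin (4 * m)))).card := by
    simp
  rw [this]
  refine (Finset.sum_le_card_nsmul _ _ ((3 * m).choose m) fun P hP => ?_).trans
    (le_of_eq (smul_eq_mul _ _))
  refine Finset.card_image_le.trans (le_of_eq ?_)
  rw [Finset.card_powersetCard, Finset.card_compl, (Finset.mem_powersetCard.1 hP).2,
    Fintype.card_fin]
  congr 1
  omega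

theorem mem_pairSet {m : ℕ} {x : Fin (4 * m) → ZMod 2 × ZMod 2} (hx : x ∈ balanced m)
    {c d : ZMod 2 × ZMod 2} (h : d ≠ c) : (cell c x, cell d x) ∈ pairSet m := by
  simp only [pairSet, Finset.mem_biUnion, Finset.mem_image]
  refine ⟨cell c x, ?_, cell d x, ?_, rfl⟩
  · rw [Finset.mem_powersetCard]
    exact ⟨Finset.subset_univ _, mem_balanced.1 hx c⟩
  · rw [Finset.mem_powersetCard]
    exact ⟨cell_disjoint h x, mem_balanced.1 hx d⟩

/-- The sequence described by three sets. -/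
def build {m : ℕ} (p : (_ : Finset (Fin (4 * m))) × (Finset (Fin (4 * m)) × Finset (Fin (4 * m)))) :
    Fin (4 * m) → ZMod 2 × ZMod 2 := fun i =>
  (if i ∈ p.1 then 1 else 0, if i ∈ p.1 then (if i ∈ p.2.1 then 1 else 0)
    else (if i ∈ p.2.2 then 1 else 0))

theorem zmod2_cases : ∀ a : ZMod 2, a = 0 ∨ a = 1 := by decide

theorem card_balanced (m : ℕ) (hm : 0 < m) : 4 ^ (4 * m) ≤ 16 * m ^ 3 * (balanced m).card := by
  refine (choose_central m hm).trans (Nat.mul_le_mul_left _ ?_)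
  let D : Finset ((_ : Finset (Fin (4 * m))) × (Finset (Fin (4 * m)) × Finset (Fin (4 * m)))) :=
    (Finset.powersetCard (2 * m) Finset.univ).sigma fun U =>
      Finset.powersetCard m U ×ˢ Finset.powersetCard m Uᶜ
  have hD : D.card = (4 * m).choose (2 * m) * ((2 * m).choose m * (2 * m).choose m) := by
    rw [Finset.card_sigma]
    have : (4 * m).choose (2 * m) =
        (Finset.powersetCard (2 * m) (Finset.univ : Finset (Fin (4 * m)))).card := by simp
    rw [this]
    refine Finset.sum_const_nat fun U hU => ?_
    rw [Finset.card_product, Finset.card_powersetCard, Finset.card_powersetCard,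
      Finset.card_compl, (Finset.mem_powersetCard.1 hU).2, Fintype.card_fin]
    have : 4 * m - 2 * m = 2 * m := by omega
    rw [this]
  rw [← hD]
  have hmem : ∀ p ∈ D, p.1.card = 2 * m ∧ p.2.1 ⊆ p.1 ∧ p.2.1.card = m ∧ p.2.2 ⊆ p.1ᶜ ∧
      p.2.2.card = m := by
    intro p hp
    simp only [D, Finset.mem_sigma, Finset.mem_product, Finset.mem_powersetCard] at hp
    tauto
  apply Finset.card_le_card_of_injOn build
  · intro p hp
    obtain ⟨h1, h2, h3, h4, h5⟩ := hmem p hp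
    rw [Finset.mem_coe, mem_balanced]
    have c11 : cell (1, 1) (build p) = p.2.1 := by
      ext i
      have := @h2 i
      simp only [cell, build, Finset.mem_filter, Finset.mem_univ, true_and, Prod.mk.injEq]
      split_ifs <;> simp_all
    have c10 : cell (1, 0) (build p) = p.1 \ p.2.1 := by
      ext i
      simp only [cell, build, Finset.mem_filter, Finset.mem_univ, true_and, Prod.mk.injEq,
        Finset.mem_sdiff]
      split_ifs <;> simp_all
    have c01 : cell (0, 1) (build p) = p.2.2 := by
      ext i
      have := @h4 i
      simp only [cell, build, Finset.mem_filter, Finset.mem_univ, true_and, Prod.mk.injEq]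
      split_ifs <;> simp_all
    have c00 : cell (0, 0) (build p) = p.1ᶜ \ p.2.2 := by
      ext i
      simp only [cell, build, Finset.mem_filter, Finset.mem_univ, true_and, Prod.mk.injEq,
        Finset.mem_sdiff, Finset.mem_compl]
      split_ifs <;> simp_all
    rintro ⟨a, b⟩
    rcases zmod2_cases a with rfl | rfl <;> rcases zmod2_cases b with rfl | rfl
    · rw [c00, Finset.card_sdiff_of_subset h4, Finset.card_compl, h1, h5, Fintype.card_fin]
      omega
    · rw [c01, h5]
    · rw [c10, Finset.card_sdiff_of_subset h2, h1, h3]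
      omega
    · rw [c11, h3]
  · intro p hp p' hp' hpp
    obtain ⟨-, h2, -, h4, -⟩ := hmem p hp
    obtain ⟨-, h2', -, h4', -⟩ := hmem p' hp'
    obtain ⟨U, P, R⟩ := p
    obtain ⟨U', P', R'⟩ := p'
    simp only at h2 h4 h2' h4'
    have hU : U = U' := by
      ext i
      have := congrArg Prod.fst (congrFun hpp i)
      simp only [build] at this
      split_ifs at this <;> simp_all
    subst hU
    have hP : P = P' := by
      ext i
      have e := congrArg Prod.snd (congrFun hpp i)
      have a := @h2 i
      have b := @h2' i
      simp only [build] at e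
      split_ifs at e <;> simp_all
    have hR : R = R' := by
      ext i
      have e := congrArg Prod.snd (congrFun hpp i)
      have a := @h4 i
      have b := @h4' i
      simp only [build] at e
      split_ifs at e <;> simp_all
    rw [hP, hR]

/-- Zero padding of a pair of messages. -/
def pad {L : ℕ} (m : ℕ) (w : Msg L × Msg L) : Fin (4 * m) → ZMod 2 × ZMod 2 := fun i =>
  if h : (i : ℕ) < L then (w.1 ⟨i, h⟩, w.2 ⟨i, h⟩) else 0

theorem pad_fst {L m : ℕ} (hL : L ≤ 4 * m) {w w' : Msg L × Msg L}
    (h : ∀ i, (pad m w i).1 = (pad m w' i).1) : w.1 = w'.1 := by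
  funext j
  have := h ⟨j, lt_of_lt_of_le j.2 hL⟩
  simpa [pad] using this

theorem pad_snd {L m : ℕ} (hL : L ≤ 4 * m) {w w' : Msg L × Msg L}
    (h : ∀ i, (pad m w i).2 = (pad m w' i).2) : w.2 = w'.2 := by
  funext j
  have := h ⟨j, lt_of_lt_of_le j.2 hL⟩
  simpa [pad] using this

theorem finite_code {L m : ℕ} (hm : 0 < m) (hL : L ≤ 4 * m) (a₀ a₁ b₀ b₁ : ℕ)
    (ha₀ : 256 * m ^ 4 * (8 * (3 * m).choose m * (8 * (3 * m).choose m)) ≤ 2 ^ a₀)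
    (ha₁ : 256 * m ^ 4 * ((4 * m).choose m * (3 * m).choose m) ≤ 2 ^ a₁)
    (hb₀ : 256 * m ^ 4 * (8 * (3 * m).choose m) ≤ 2 ^ b₀)
    (hb₁ : 256 * m ^ 4 * (4 * m).choose m ≤ 2 ^ b₁) :
    ∃ C : Code L, IsZeroError C.base ∧ C.base.stor 0 = a₀ ∧ C.base.stor 1 = a₁ ∧
      betaRate C.base 0 = b₀ ∧ betaRate C.base 1 = b₁ := by
  have hN : 0 < (3 * m).choose m := Nat.choose_pos (by omega)
  obtain ⟨h, G, hGT, hcard, hG⟩ := exists_hash (balanced m)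
    (fun k : Fin 2 × Fin 2 => cell (symA k.1)) (fun k : Fin 2 × Fin 2 => cell (symB k.2))
    ((3 * m).choose m) (fun x hx k => fiber_card x hx (sym_ne _ _)) (by simpa using hN)
  have hM : 2 * (Fintype.card (Fin 2 × Fin 2) * (3 * m).choose m) = 8 * (3 * m).choose m := by
    simp; ring
  have hX : Fintype.card (Fin (4 * m) → ZMod 2 × ZMod 2) = 4 ^ (4 * m) := by
    simp
  obtain ⟨v, hv⟩ := exists_cover_all G (32 * m ^ 3) (8 * m)
    (by
      rw [hX]
      calc 4 ^ (4 * m) ≤ 16 * m ^ 3 * (balanced m).card := card_balanced m hm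
        _ ≤ 16 * m ^ 3 * (2 * G.card) := Nat.mul_le_mul_left _ hcard
        _ = _ := by ring)
    (by
      rw [hX]
      have : (4 : ℕ) = 2 ^ 2 := by norm_num
      rw [this, ← pow_mul]
      exact le_of_eq (by ring))
    (by omega)
  have ht : 32 * m ^ 3 * (8 * m) = 256 * m ^ 4 := by ring
  choose j hj using fun w : Msg L × Msg L => hv (pad m w)
  let y : Msg L × Msg L → (Fin (4 * m) → ZMod 2 × ZMod 2) := fun w => pad m w + v (j w)
  have hy : ∀ w, y w ∈ G := hj
  have hcell : ∀ q r w w', j w = j w' → h (cell (symA q) (y w)) = h (cell (symA q) (y w')) →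
      cell (symB r) (y w) = cell (symB r) (y w') → ∀ i,
      ((y w i = symA q ↔ y w' i = symA q) ∧ (y w i = symB r ↔ y w' i = symB r)) := by
    intro q r w w' hjj hh hB i
    have hA := hG _ (hy w') _ (hy w) (q, r) hB hh
    exact ⟨cell_eq_iff.1 hA i, cell_eq_iff.1 hB i⟩
  refine exists_code'
    (fun w => (j w, (h (cell (symA 0) (y w)), h (cell (symA 1) (y w)))))
    (fun w => (j w, (cell (symB 0) (y w), cell (symB 1) (y w))))
    (fun q w => (j w, h (cell (symA q) (y w))))
    (fun q w => (j w, cell (symB q) (y w))) a₀ a₁ b₀ b₁ ?_ ?_ ?_ ?_ ?_ ?_ ?_ ?_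
  · refine (Finset.card_le_univ _).trans (le_trans (le_of_eq ?_) ha₀)
    rw [Fintype.card_prod, Fintype.card_prod, Fintype.card_fin, Fintype.card_fin, hM, ht]
  · refine le_trans ?_ ha₁
    have hsub : Finset.univ.image (fun w => (j w, (cell (symB 0) (y w), cell (symB 1) (y w)))) ⊆
        Finset.univ ×ˢ pairSet m := by
      intro z hz
      obtain ⟨w, -, rfl⟩ := Finset.mem_image.1 hz
      exact Finset.mem_product.2 ⟨Finset.mem_univ _, mem_pairSet (hGT (hy w)) (by decide)⟩
    refine (Finset.card_le_card hsub).trans ?_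
    rw [Finset.card_product, Finset.card_univ, Fintype.card_fin, ht]
    exact Nat.mul_le_mul_left _ (card_pairSet m)
  · intro q
    refine (Finset.card_le_univ _).trans (le_trans (le_of_eq ?_) hb₀)
    rw [Fintype.card_prod, Fintype.card_fin, Fintype.card_fin, hM, ht]
  · intro q
    refine le_trans ?_ hb₁
    have hsub : Finset.univ.image (fun w => (j w, cell (symB q) (y w))) ⊆
        Finset.univ ×ˢ Finset.powersetCard m Finset.univ := by
      intro z hz
      obtain ⟨w, -, rfl⟩ := Finset.mem_image.1 hz
      refine Finset.mem_product.2 ⟨Finset.mem_univ _, Finset.mem_powersetCard.2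
        ⟨Finset.subset_univ _, mem_balanced.1 (hGT (hy w)) _⟩⟩
    refine (Finset.card_le_card hsub).trans ?_
    rw [Finset.card_product, Finset.card_univ, Fintype.card_fin, ht]
    simp
  · intro q w w' hs
    simp only [Prod.mk.injEq] at hs ⊢
    refine ⟨hs.1, ?_⟩
    rcases Fin.exists_fin_two.1 ⟨q, rfl⟩ with rfl | rfl
    · exact hs.2.1
    · exact hs.2.2
  · intro q w w' hs
    simp only [Prod.mk.injEq] at hs ⊢
    refine ⟨hs.1, ?_⟩
    rcases Fin.exists_fin_two.1 ⟨q, rfl⟩ with rfl | rfl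
    · exact hs.2.1
    · exact hs.2.2
  · intro q w w' e1 e2
    simp only [Prod.mk.injEq] at e1 e2
    have hc := hcell q q w w' e1.1 e1.2 e2.2
    refine pad_fst hL fun i => ?_
    have := sym_fst q _ _ (hc i).1 (hc i).2
    simpa [y, e1.1] using this
  · intro q r w w' hq e1 e2
    simp only [Prod.mk.injEq] at e1 e2
    have hc := hcell q r w w' e1.1 e1.2 e2.2
    refine pad_snd hL fun i => ?_
    have := sym_snd q r _ _ hq (hc i).1 (hc i).2
    simpa [y, e1.1] using this

/-! ### Asymptotics -/

theorem exists_bits (K : ℕ) (hK : 0 < K) (x : ℝ) (hx : Real.logb 2 K ≤ x) :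
    ∃ b : ℕ, K ≤ 2 ^ b ∧ (b : ℝ) ≤ x + 1 := by
  have hK1 : (1 : ℝ) ≤ K := by exact_mod_cast hK
  have h0 : 0 ≤ Real.logb 2 K := Real.logb_nonneg (by norm_num) hK1
  refine ⟨⌈Real.logb 2 K⌉₊, ?_, ?_⟩
  · have h := Nat.le_ceil (Real.logb 2 (K : ℝ))
    rw [Real.logb_le_iff_le_rpow (by norm_num) (by linarith), Real.rpow_natCast] at h
    exact_mod_cast h
  · have := Nat.ceil_lt_add_one h0
    linarith

theorem logb_pow_two (k : ℕ) : Real.logb 2 ((2 : ℝ) ^ k) = k := by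
  rw [Real.logb_pow, Real.logb_self_eq_one (by norm_num), mul_one]

theorem logb_27 : Real.logb 2 27 = 3 * Real.logb 2 3 := by
  rw [show (27 : ℝ) = 3 ^ 3 by norm_num, Real.logb_pow]; norm_num

theorem logb_4 : Real.logb 2 4 = 2 := by
  rw [show (4 : ℝ) = 2 ^ 2 by norm_num, logb_pow_two]; norm_num

theorem logb_8 : Real.logb 2 8 = 3 := by
  rw [show (8 : ℝ) = 2 ^ 3 by norm_num, logb_pow_two]; norm_num

theorem logb_64 : Real.logb 2 64 = 6 := by
  rw [show (64 : ℝ) = 2 ^ 6 by norm_num, logb_pow_two]; norm_num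

theorem logb_256 : Real.logb 2 256 = 8 := by
  rw [show (256 : ℝ) = 2 ^ 8 by norm_num, logb_pow_two]; norm_num

theorem log_choose_three (m : ℕ) :
    Real.logb 2 ((3 * m).choose m : ℕ) ≤ m * (3 * Real.logb 2 3 - 2) := by
  have hN : 0 < (3 * m).choose m := Nat.choose_pos (by omega)
  have hN' : (0 : ℝ) < ((3 * m).choose m : ℕ) := by exact_mod_cast hN
  have h : (((3 * m).choose m : ℕ) : ℝ) * 4 ^ m ≤ 27 ^ m := by exact_mod_cast choose_three m
  have h2 := Real.logb_le_logb_of_le (b := 2) (by norm_num) (by positivity) h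
  rw [Real.logb_mul hN'.ne' (by positivity), Real.logb_pow, Real.logb_pow, logb_27, logb_4] at h2
  linarith

theorem log_choose_four (m : ℕ) :
    Real.logb 2 ((4 * m).choose m : ℕ) ≤ m * (8 - 3 * Real.logb 2 3) := by
  have hN : 0 < (4 * m).choose m := Nat.choose_pos (by omega)
  have hN' : (0 : ℝ) < ((4 * m).choose m : ℕ) := by exact_mod_cast hN
  have h : (((4 * m).choose m : ℕ) : ℝ) * 27 ^ m ≤ 256 ^ m := by exact_mod_cast choose_four m
  have h2 := Real.logb_le_logb_of_le (b := 2) (by norm_num) (by positivity) h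
  rw [Real.logb_mul hN'.ne' (by positivity), Real.logb_pow, Real.logb_pow, logb_27,
    logb_256] at h2
  linarith

theorem log_choose_both (m : ℕ) :
    Real.logb 2 ((4 * m).choose m * (3 * m).choose m : ℕ) ≤ 6 * m := by
  have hN : 0 < (4 * m).choose m * (3 * m).choose m :=
    Nat.mul_pos (Nat.choose_pos (by omega)) (Nat.choose_pos (by omega))
  have hN' : (0 : ℝ) < ((4 * m).choose m * (3 * m).choose m : ℕ) := by exact_mod_cast hN
  have h : (((4 * m).choose m * (3 * m).choose m : ℕ) : ℝ) ≤ 64 ^ m := by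
    exact_mod_cast choose_both m
  have h2 := Real.logb_le_logb_of_le (b := 2) (by norm_num) hN' h
  rw [Real.logb_pow, logb_64] at h2
  linarith

theorem eventually_small (ε : ℝ) (hε : 0 < ε) :
    ∃ L₀ : ℕ, ∀ L ≥ L₀, 1 ≤ L ∧ 17 + 4 * Real.logb 2 (L : ℝ) ≤ L * ε := by
  have hl : 0 < Real.log 2 := Real.log_pos (by norm_num)
  have h1 := Real.isLittleO_log_id_atTop.def (c := ε * Real.log 2 / 8) (by positivity)
  have h2 := (tendsto_natCast_atTop_atTop (R := ℝ)).eventually h1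
  have h3 := (tendsto_natCast_atTop_atTop (R := ℝ)).eventually_ge_atTop (34 / ε)
  have h4 := Filter.eventually_ge_atTop 1 (α := ℕ)
  obtain ⟨L₀, h⟩ := Filter.eventually_atTop.1 (h2.and (h3.and h4))
  refine ⟨L₀, fun L hL => ?_⟩
  obtain ⟨e1, e2, e3⟩ := h L hL
  refine ⟨e3, ?_⟩
  have hL1 : (1 : ℝ) ≤ L := by exact_mod_cast e3
  simp only [id, Real.norm_eq_abs] at e1
  rw [abs_of_nonneg (Real.log_nonneg hL1), abs_of_nonneg (by linarith : (0 : ℝ) ≤ L)] at e1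
  have e4 : Real.logb 2 (L : ℝ) ≤ ε * L / 8 := by
    rw [Real.logb, div_le_iff₀ hl]
    linarith
  rw [div_le_iff₀ hε] at e2
  linarith

theorem achievable_point : Achievable (1/4 + (3/4) * Real.logb 2 3, 3/4) := by
  intro ε hε
  obtain ⟨L₀, h⟩ := eventually_small ε hε
  refine ⟨L₀, fun L hL => ?_⟩
  obtain ⟨hL1, hsmall⟩ := h L hL
  obtain ⟨m, hm, hLm, hmL, hmL'⟩ : ∃ m : ℕ, 0 < m ∧ L ≤ 4 * m ∧ 4 * m ≤ L + 3 ∧ m ≤ L :=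
    ⟨(L + 3) / 4, by omega, by omega, by omega, by omega⟩
  have hN3 : 0 < (3 * m).choose m := Nat.choose_pos (by omega)
  have hN4 : 0 < (4 * m).choose m := Nat.choose_pos (by omega)
  have hmr : (0 : ℝ) < m := by exact_mod_cast hm
  have hr3 : (((3 * m).choose m : ℕ) : ℝ) ≠ 0 := by exact_mod_cast hN3.ne'
  have hr4 : (((4 * m).choose m : ℕ) : ℝ) ≠ 0 := by exact_mod_cast hN4.ne'
  have l3 := log_choose_three m
  have l4 := log_choose_four m
  have l34 := log_choose_both m
  set lam := Real.logb 2 3 with hlam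
  have hlam53 : lam < 5 / 3 := logb_two_three_lt
  have hlam0 : 0 ≤ lam := Real.logb_nonneg (by norm_num) (by norm_num)
  set τ : ℝ := 8 + 4 * Real.logb 2 m with hτ
  have ht : Real.logb 2 (256 * (m : ℝ) ^ 4) = τ := by
    rw [Real.logb_mul (by norm_num) (by positivity), logb_256, Real.logb_pow]
    norm_num [hτ]
  have ht0 : (256 * (m : ℝ) ^ 4) ≠ 0 := by positivity
  have hτL : τ + 9 ≤ L * ε := by
    have : Real.logb 2 (m : ℝ) ≤ Real.logb 2 (L : ℝ) :=
      Real.logb_le_logb_of_le (by norm_num) hmr (by exact_mod_cast hmL')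
    linarith
  obtain ⟨a₀, ha₀, ha₀'⟩ := exists_bits
    (256 * m ^ 4 * (8 * (3 * m).choose m * (8 * (3 * m).choose m))) (by positivity)
    (τ + 2 * (3 + m * (3 * lam - 2))) (by
      push_cast
      rw [Real.logb_mul ht0 (by positivity), ht, Real.logb_mul (by positivity) (by positivity),
        Real.logb_mul (by norm_num) hr3, logb_8]
      linarith)
  obtain ⟨a₁, ha₁, ha₁'⟩ := exists_bits
    (256 * m ^ 4 * ((4 * m).choose m * (3 * m).choose m)) (by positivity)
    (τ + 6 * m) (by
      rw [Nat.cast_mul]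
      push_cast at l34 ⊢
      rw [Real.logb_mul ht0 (by positivity), ht]
      linarith)
  obtain ⟨b₀, hb₀, hb₀'⟩ := exists_bits
    (256 * m ^ 4 * (8 * (3 * m).choose m)) (by positivity)
    (τ + (3 + m * (3 * lam - 2))) (by
      push_cast
      rw [Real.logb_mul ht0 (by positivity), ht, Real.logb_mul (by norm_num) hr3, logb_8]
      linarith)
  obtain ⟨b₁, hb₁, hb₁'⟩ := exists_bits
    (256 * m ^ 4 * (4 * m).choose m) (by positivity)
    (τ + m * (8 - 3 * lam)) (by
      push_cast
      rw [Real.logb_mul ht0 hr4, ht]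
      linarith)
  obtain ⟨C, hz, s0, s1, r0, r1⟩ := finite_code hm hLm a₀ a₁ b₀ b₁ ha₀ ha₁ hb₀ hb₁
  have hmr' : 4 * (m : ℝ) ≤ L + 3 := by exact_mod_cast hmL
  refine ⟨C, hz, ?_, ?_⟩
  · rw [s0, s1]
    push_cast
    nlinarith
  · rw [r0, r1]
    simp only
    nlinarith

/-- There exists a pair `(ᾱ, β̄)` in the achievable storage-retrieval rate
region of the (2,2) PIR problem with `β̄ = 3/4` and `ᾱ + 6β̄ < 6` (namely
`ᾱ = 1/4 + (3/4)·log₂ 3 < 3/2`); consequently, non-linear (2,2) PIR codes achieve a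
pair that is not achievable by any linear (2,2) PIR code. -/
theorem statement11 :
    ∃ ab : ℝ × ℝ, ab ∈ Region ∧ ab.2 = 3/4 ∧
      ab.1 = 1/4 + (3/4) * Real.logb 2 3 ∧ ab.1 < 3/2 ∧
      ab.1 + 6 * ab.2 < 6 ∧ ¬ LinAchievable ab := by
  refine ⟨(1/4 + (3/4) * Real.logb 2 3, 3/4), achievable_point, rfl, rfl, ?_, ?_, ?_⟩
  · have := logb_two_three_lt
    simp only
    linarith
  · have := logb_two_three_lt
    simp only
    linarith
  · intro h
    have h6 := lin_converse _ h
    have := logb_two_three_lt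
    simp only at h6
    linarith

end PIR
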